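/- Fix an integer q ≥ 2. Let (h_k)_{k≥0} be the rational sequence defined by h_0 = 1 and h_k = ((q-1)k+1)/k · Σ_{j_1+…+j_q = k−1, j_i ≥ 0} h_{j_1}⋯h_{j_q} for k ≥ 1, and define d_k := k!·h_k/((q-1)k+1) for k ≥ 1. Then for every k ≥ 1, ((q-1)k+1)·d_k = q^k·((q-1)k+1)^{k-1}; equivalently, d_k = q^k·((q-1)k+1)^{k-2} for every k ≥ 2 and d_1 = 1. -/

import Mathlib

open Polynomial in
noncomputable def abelP (a : ℚ) : ℕ → ℚ[X]
  | 0 => 1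
  | n + 1 => C (1 / (Nat.factorial (n + 1) : ℚ)) * (X * (X + C (a * ((n : ℚ) + 1))) ^ n)

open Polynomial in
theorem abelP_deriv (a : ℚ) (n : ℕ) :
    derivative (abelP a (n + 1)) = (abelP a n).comp (X + C a) := by
  cases n with
  | zero => simp [abelP]
  | succ m =>
    have h1 : (C (1 / (Nat.factorial (m + 1 + 1) : ℚ)) : ℚ[X]) * ((m : ℚ[X]) + 2)
        = C (1 / (Nat.factorial (m + 1) : ℚ)) := by
      have : ((m : ℚ[X]) + 2) = C ((m : ℚ) + 2) := by
        rw [C_add]; rfl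
      rw [this, ← C_mul]
      congr 1
      rw [Nat.factorial_succ (m + 1)]
      have := Nat.factorial_ne_zero (m + 1)
      push_cast
      field_simp
      ring
    simp only [abelP]
    rw [← h1]
    simp only [derivative_mul, derivative_C, derivative_X, derivative_pow, derivative_add,
      mul_comp, C_comp, X_comp, pow_comp, add_comp, C_mul, C_add, map_natCast, C_1, natCast_comp, one_comp, ofNat_comp]
    push_cast
    simp only [map_add, map_natCast, map_one, derivative_natCast, derivative_one]
    ring

open Polynomial in
theorem poly_ext_deriv (p r : ℚ[X]) (hd : derivative p = derivative r)
    (h0 : p.eval 0 = r.eval 0) : p = r := by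
  have h := (derivative_eq_zero (p := p - r)).1 (by rw [derivative_sub, hd, sub_self])
  rw [natDegree_eq_zero] at h
  obtain ⟨c, hc⟩ := h
  have : c = 0 := by
    have := congrArg (eval 0) hc
    simpa [h0] using this
  subst this
  rw [map_zero] at hc
  exact (sub_eq_zero.mp hc.symm)

open Polynomial in
theorem abelP_eval_zero (a : ℚ) (n : ℕ) : (abelP a (n + 1)).eval 0 = 0 := by
  simp [abelP]

open Polynomial in
theorem abelP_add (a y : ℚ) (n : ℕ) :
    ∑ ij ∈ Finset.HasAntidiagonal.antidiagonal n, abelP a ij.1 * C ((abelP a ij.2).eval y)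
      = (abelP a n).comp (X + C y) := by
  induction n with
  | zero => simp [abelP]
  | succ n ih =>
    apply poly_ext_deriv
    · rw [derivative_comp, abelP_deriv, Finset.Nat.sum_antidiagonal_succ]
      have h2 := congrArg (compRingHom (X + C a)) ih
      simp only [map_sum, coe_compRingHom_apply, mul_comp, C_comp] at h2
      simp only [derivative_add, derivative_sum, derivative_mul, derivative_C, abelP_deriv,
        mul_zero, add_zero]
      rw [h2]
      simp [abelP, comp_assoc]
      congr 1
      ring
    · rw [Finset.Nat.sum_antidiagonal_succ]
      simp [eval_finsetSum, abelP_eval_zero]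
      simp [abelP]

open Polynomial in
theorem abel_tuple (a b x : ℚ) (m : ℕ) : ∀ n : ℕ,
    ∑ j ∈ Finset.Nat.antidiagonalTuple m n, ∏ i : Fin m, (b ^ (j i) * (abelP a (j i)).eval x)
      = b ^ n * (abelP a n).eval (m * x) := by
  induction m with
  | zero =>
    intro n
    cases n with
    | zero => simp [abelP]
    | succ n => simp [abelP_eval_zero]
  | succ m ih =>
    intro n
    have hs : Finset.Nat.antidiagonalTuple (m + 1) n = (Finset.HasAntidiagonal.antidiagonal n).biUnion
        (fun ij => (Finset.Nat.antidiagonalTuple m ij.2).image (fun t => Fin.cons ij.1 t)) := by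
      ext f
      simp only [Finset.Nat.mem_antidiagonalTuple, Finset.mem_biUnion, Finset.mem_image,
        Finset.HasAntidiagonal.mem_antidiagonal, Fin.sum_univ_succ]
      constructor
      · intro hf
        exact ⟨(f 0, ∑ i : Fin m, f i.succ), hf, Fin.tail f, rfl, Fin.cons_self_tail f⟩
      · rintro ⟨ij, h1, t, h2, rfl⟩
        simp [h2, h1]
    rw [hs, Finset.sum_biUnion]
    · have key := congrArg (eval x) (abelP_add a (m * x) n)
      simp only [eval_finsetSum, eval_mul, eval_C, eval_comp, eval_add, eval_X] at key
      have e : ((m + 1 : ℕ) : ℚ) * x = x + m * x := by push_cast; ring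
      rw [e, ← key, Finset.mul_sum]
      refine Finset.sum_congr rfl fun ij hij => ?_
      rw [Finset.sum_image (fun s _ t _ hst => Fin.cons_right_injective _ hst)]
      simp only [Fin.prod_univ_succ, Fin.cons_zero, Fin.cons_succ]
      rw [← Finset.mul_sum, ih, ← Finset.HasAntidiagonal.mem_antidiagonal.mp hij, pow_add]
      ring
    · intro s hs' t ht hst
      rw [Function.onFun, Finset.disjoint_left]
      intro f hf hf'
      simp only [Finset.mem_image] at hf hf'
      obtain ⟨u, -, rfl⟩ := hf
      obtain ⟨v, -, hv⟩ := hf'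
      apply hst
      have := congrFun hv 0
      simp only [Fin.cons_zero] at this
      have h1 := Finset.HasAntidiagonal.mem_antidiagonal.mp hs'
      have h2 := Finset.HasAntidiagonal.mem_antidiagonal.mp ht
      ext <;> omega


/-- With `q ≥ 2`, `h` defined by the recurrence of the paper and
`d k := k!·h k/((q-1)k+1)` for `k ≥ 1`, we have
`((q-1)k+1)·d k = q^k·((q-1)k+1)^(k-1)` for all `k ≥ 1`; equivalently
`d k = q^k·((q-1)k+1)^(k-2)` for `k ≥ 2` and `d 1 = 1`. -/
theorem stmt_1 (q : ℕ) (hq : 2 ≤ q) (h : ℕ → ℚ)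
    (h0 : h 0 = 1)
    (hrec : ∀ k : ℕ, 1 ≤ k →
      h k = ((((q - 1) * k + 1 : ℕ) : ℚ) / (k : ℚ)) *
        ∑ j ∈ Finset.Nat.antidiagonalTuple q (k - 1), ∏ i : Fin q, h (j i))
    (d : ℕ → ℚ)
    (hd : ∀ k : ℕ, 1 ≤ k →
      d k = (Nat.factorial k : ℚ) * h k / (((q - 1) * k + 1 : ℕ) : ℚ)) :
    (∀ k : ℕ, 1 ≤ k →
        (((q - 1) * k + 1 : ℕ) : ℚ) * d k = (q : ℚ) ^ k * (((q - 1) * k + 1 : ℕ) : ℚ) ^ (k - 1))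
      ∧ (∀ k : ℕ, 2 ≤ k →
        d k = (q : ℚ) ^ k * (((q - 1) * k + 1 : ℕ) : ℚ) ^ (k - 2))
      ∧ d 1 = 1 := by
  obtain ⟨r, rfl⟩ : ∃ r, q = r + 1 := ⟨q - 1, by omega⟩
  simp only [Nat.add_sub_cancel] at *
  have main : ∀ k, h k = ((r + 1 : ℕ) : ℚ) ^ k * (abelP r k).eval 1 := by
    intro k
    induction k using Nat.strong_induction_on with
    | _ k ih =>
      cases k with
      | zero => simp [h0, abelP]
      | succ k =>
        rw [hrec (k + 1) (by omega), Nat.add_sub_cancel]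
        have := abel_tuple (r : ℚ) ((r + 1 : ℕ) : ℚ) 1 (r + 1) k
        rw [Finset.sum_congr rfl (g := fun j => ∏ i : Fin (r + 1),
          (((r + 1 : ℕ) : ℚ) ^ (j i) * (abelP r (j i)).eval 1)), this]
        · cases k with
          | zero => simp [abelP]
          | succ k =>
            simp only [abelP, Polynomial.eval_mul, Polynomial.eval_C, Polynomial.eval_X,
              Polynomial.eval_pow, Polynomial.eval_add]
            rw [Nat.factorial_succ (k + 1)]
            have hf : ((Nat.factorial (k + 1) : ℕ) : ℚ) ≠ 0 := by
              exact_mod_cast Nat.factorial_ne_zero (k + 1)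
            have hk : ((k : ℚ) + 1 + 1) ≠ 0 := by positivity
            have e : ((r : ℚ) + 1) * 1 + r * (k + 1) = 1 + r * (k + 1 + 1) := by ring
            push_cast
            rw [e]
            generalize hz : (1 : ℚ) + r * (k + 1 + 1) = z
            have e2 : (r : ℚ) * (k + 1 + 1) + 1 = z := by rw [← hz]; ring
            rw [e2]
            field_simp
            ring
        · intro j hj
          refine Finset.prod_congr rfl fun i _ => ih _ ?_
          rw [Finset.Nat.mem_antidiagonalTuple] at hj
          have := Finset.single_le_sum (f := j) (fun _ _ => Nat.zero_le _) (Finset.mem_univ i)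
          omega
  have A : ∀ k : ℕ, 1 ≤ k →
      ((r * k + 1 : ℕ) : ℚ) * d k = ((r + 1 : ℕ) : ℚ) ^ k * ((r * k + 1 : ℕ) : ℚ) ^ (k - 1) := by
    intro k hk
    have hp : ((r * k + 1 : ℕ) : ℚ) ≠ 0 := by exact Nat.cast_ne_zero.mpr (Nat.succ_ne_zero _)
    rw [hd k hk, mul_div_cancel₀ _ hp, main]
    obtain ⟨k, rfl⟩ : ∃ m, k = m + 1 := ⟨k - 1, by omega⟩
    have hf : ((Nat.factorial (k + 1) : ℕ) : ℚ) ≠ 0 := by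
      exact_mod_cast Nat.factorial_ne_zero (k + 1)
    simp only [abelP, Polynomial.eval_mul, Polynomial.eval_C, Polynomial.eval_X,
      Polynomial.eval_pow, Polynomial.eval_add, Nat.add_sub_cancel]
    have e : (1 : ℚ) + r * (k + 1) = ((r * (k + 1) + 1 : ℕ) : ℚ) := by push_cast; ring
    rw [e]
    field_simp
  refine ⟨A, fun k hk => ?_, ?_⟩
  · have hp : ((r * k + 1 : ℕ) : ℚ) ≠ 0 := by exact Nat.cast_ne_zero.mpr (Nat.succ_ne_zero _)
    apply mul_left_cancel₀ hp
    rw [A k (by omega)]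
    obtain ⟨k, rfl⟩ : ∃ m, k = m + 2 := ⟨k - 2, by omega⟩
    rw [show k + 2 - 1 = k + 1 by omega, Nat.add_sub_cancel, pow_succ]
    ring
  · have := A 1 le_rfl
    have hp : ((r + 1 : ℕ) : ℚ) ≠ 0 := by exact Nat.cast_ne_zero.mpr (Nat.succ_ne_zero _)
    apply mul_left_cancel₀ hp
    simpa using this
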